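/- Let q = 2^{2e+1} with e ≥ 1 and put σ = 2^{e+1}. Consider the set of vectors T = {(0,0,1,0)} ∪ {(x, y, x^σ + xy + y^{σ+2}, 1) : x, y ∈ GF(q)} in GF(q)^4. Then T consists of q²+1 vectors which are pairwise non-proportional over GF(q), and any three distinct vectors in T are linearly independent over GF(q); hence T spans an ovoid (the Tits ovoid) in PG(3,q). -/

import Mathlib

/-!
Let `σ` be an endomorphism with `σ (σ x) = x ^ 2`. The form `f x y = σ x + x * y + σ y * y ^ 2` is
anisotropic, and it is compatible with translations: `f (p + d) - f p` is, up to a term linear in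
`d`, the value of `f` at a linear image of `d`. So if three points of the graph of `f` are
collinear, one may be moved to the origin, which gives `f (t • d) = t * f d` with `t ≠ 0, 1`. But
`f (t • d) - t * f d` is, up to a nonzero factor depending on `t`, itself a value of `f`, taken at a
point that is the origin only for `d = 0`; so it vanishes only for `d = 0`.
-/

/-- A Tits endomorphism: a square root of the Frobenius endomorphism `x ↦ x ^ 2`. Its
value at `2` shows that `2 = 0` in `R`. -/
def IsTitsEndomorphism {R : Type*} [CommRing R] (σ : R →+* R) : Prop :=
  ∀ x, σ (σ x) = x ^ 2

/-- The form `x ^ σ + x * y + y ^ (σ + 2)` whose graph is the affine part of the Tits ovoid, with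
the power `x ^ σ` read as the value of an endomorphism `σ`. -/
def titsForm {R : Type*} [CommRing R] (σ : R →+* R) (x y : R) : R :=
  σ x + x * y + σ y * y ^ 2

/-- The graph of `f` contains no three distinct collinear points. The candidate points lie over
`(x, y)`, `(x + a, y + b)` and `(x + t * a, y + t * b)`. -/
def NoThreeCollinearOnGraph {R : Type*} [CommRing R] (f : R → R → R) : Prop :=
  ∀ x y a b t, f (x + t * a) (y + t * b) = f x y + t * (f (x + a) (y + b) - f x y) →
    t = 0 ∨ t = 1 ∨ a = 0 ∧ b = 0

/-- Representatives in `F⁴` of the graph of `f`, placed in the affine chart where the last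
coordinate is `1`, together with the point at infinity of the vertical lines. -/
def projectiveGraph {F : Type*} [Field F] (f : F → F → F) : Set (Fin 4 → F) :=
  insert ![0, 0, 1, 0] {w | ∃ x y : F, w = ![x, y, f x y, 1]}

namespace IsTitsEndomorphism

section CommRing

variable {R : Type*} [CommRing R] {σ : R →+* R}

theorem two_eq_zero (hσ : IsTitsEndomorphism σ) : (2 : R) = 0 := by
  have two_eq_four : (2 : R) = 2 ^ 2 := by simpa only [map_ofNat] using hσ 2
  linear_combination -two_eq_four

theorem titsForm_add (hσ : IsTitsEndomorphism σ) (x y a b : R) :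
    titsForm σ (x + a) (y + b) =
      titsForm σ x y + titsForm σ (a + σ y * b) b + x * b + a * y := by
  simp only [titsForm, map_add, map_mul, hσ y]
  linear_combination (σ y + σ b) * y * b * hσ.two_eq_zero

-- For `b = 1` the equation `titsForm σ (t * a) t = t * titsForm σ a 1` becomes `σ z + z + 1 = 0`
-- after an affine change of variable from `a` to `z`; this is its homogeneous, division-free form.
theorem mul_titsForm_mul_sub_eq_titsForm (hσ : IsTitsEndomorphism σ) (t a b : R) :
    (t ^ 2 + σ t) * (σ t + t) * (titsForm σ (t * a) (t * b) - t * titsForm σ a b) =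
      titsForm σ ((t ^ 2 + σ t) * ((σ t + t) * a + σ t * (t + 1) * (σ b * b)))
        (t * (t + 1) * b) := by
  have two_eq_zero := hσ.two_eq_zero
  simp only [titsForm, map_add, map_mul, map_pow, map_one, hσ t, hσ b]
  grind

end CommRing

section NoZeroDivisors

variable {R : Type*} [CommRing R] [NoZeroDivisors R] {σ : R →+* R}

theorem eq_zero_of_map_eq_zero (hσ : IsTitsEndomorphism σ) {x : R} (hx : σ x = 0) : x = 0 := by
  have hsq : x ^ 2 = 0 := by rw [← hσ x, hx, map_zero]
  exact eq_zero_of_pow_eq_zero hsq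

theorem eq_zero_or_eq_one_of_map_add_self_eq_zero (hσ : IsTitsEndomorphism σ) {t : R}
    (ht : σ t + t = 0) : t = 0 ∨ t = 1 := by
  have map_ht : t ^ 2 + σ t = 0 := by simpa only [map_add, map_zero, hσ t] using congrArg σ ht
  have factored : t * (t - 1) = 0 := by linear_combination map_ht - ht
  exact (mul_eq_zero.mp factored).imp_right sub_eq_zero.mp

theorem eq_zero_of_titsForm_eq_zero (hσ : IsTitsEndomorphism σ) {x y : R}
    (h : titsForm σ x y = 0) : x = 0 ∧ y = 0 := by
  have form_eq_zero : σ x + x * y + σ y * y ^ 2 = 0 := h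
  have map_form_eq_zero : x ^ 2 + σ x * σ y + y ^ 2 * σ y ^ 2 = 0 := by
    simpa only [map_add, map_mul, map_pow, map_zero, hσ x, hσ y] using congrArg σ form_eq_zero
  have factored : x * (x - σ y * y) = 0 := by
    linear_combination map_form_eq_zero - σ y * form_eq_zero
  have norm_eq_zero : σ y * y ^ 2 = 0 := by
    rcases mul_eq_zero.mp factored with rfl | hx
    · simpa using form_eq_zero
    · have map_x : σ x = y ^ 2 * σ y := by rw [sub_eq_zero.mp hx, map_mul, hσ y]
      linear_combination form_eq_zero - map_x - y * hx - y ^ 2 * σ y * hσ.two_eq_zero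
  have hy : y = 0 :=
    (mul_eq_zero.mp norm_eq_zero).elim hσ.eq_zero_of_map_eq_zero eq_zero_of_pow_eq_zero
  subst hy
  exact ⟨hσ.eq_zero_of_map_eq_zero (by simpa using form_eq_zero), rfl⟩

theorem eq_zero_of_titsForm_mul_eq_mul (hσ : IsTitsEndomorphism σ) {t a b : R}
    (ht0 : t ≠ 0) (ht1 : t ≠ 1) (h : titsForm σ (t * a) (t * b) = t * titsForm σ a b) :
    a = 0 ∧ b = 0 := by
  have ht_add_one : t + 1 ≠ 0 := fun h ↦ ht1 (by linear_combination h - hσ.two_eq_zero)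
  have hσt_add : σ t + t ≠ 0 := fun h ↦
    (hσ.eq_zero_or_eq_one_of_map_add_self_eq_zero h).elim ht0 ht1
  have hsq_add : t ^ 2 + σ t ≠ 0 := fun h ↦
    hσt_add (hσ.eq_zero_of_map_eq_zero (by rw [map_add, hσ t, h]))
  obtain ⟨hX, hY⟩ := hσ.eq_zero_of_titsForm_eq_zero <|
    (hσ.mul_titsForm_mul_sub_eq_titsForm t a b).symm.trans (by rw [h, sub_self, mul_zero])
  have hb : b = 0 := by simpa [ht0, ht_add_one] using hY
  subst hb
  exact ⟨by simpa [hsq_add, hσt_add] using hX, rfl⟩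

theorem noThreeCollinearOnGraph_titsForm (hσ : IsTitsEndomorphism σ) :
    NoThreeCollinearOnGraph (titsForm σ) := by
  intro x y a b t collinear
  by_contra! ⟨ht0, ht1, hab⟩
  have secant : titsForm σ (t * (a + σ y * b)) (t * b) = t * titsForm σ (a + σ y * b) b := by
    rw [hσ.titsForm_add, hσ.titsForm_add] at collinear
    rw [show t * (a + σ y * b) = t * a + σ y * (t * b) by ring]
    linear_combination collinear
  obtain ⟨ha, rfl⟩ := hσ.eq_zero_of_titsForm_mul_eq_mul ht0 ht1 secant
  exact hab (by simpa using ha) rfl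

end NoZeroDivisors

end IsTitsEndomorphism

section ProjectiveGraph

variable {F : Type*} [Field F] {f : F → F → F}

theorem encard_projectiveGraph (f : F → F → F) :
    (projectiveGraph f).encard = ENat.card F ^ 2 + 1 := by
  let point : F × F → Fin 4 → F := fun p ↦ ![p.1, p.2, f p.1 p.2, 1]
  have point_injective : Function.Injective point := fun p p' h ↦
    Prod.ext (congrFun h 0) (congrFun h 1)
  have affine_eq_range : {w | ∃ x y : F, w = ![x, y, f x y, 1]} = Set.range point := by
    ext w
    simp [point, eq_comm]
  have infinity_notMem : ![0, 0, 1, 0] ∉ Set.range point := fun ⟨_, h⟩ ↦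
    one_ne_zero (congrFun h 3)
  rw [projectiveGraph, affine_eq_range, Set.encard_insert_of_notMem infinity_notMem,
    ← Set.image_univ, point_injective.encard_image, Set.encard_univ, ENat.card_prod, sq]

theorem zero_notMem_projectiveGraph (f : F → F → F) : 0 ∉ projectiveGraph f := by
  rintro (h | ⟨x, y, h⟩)
  · exact zero_ne_one (congrFun h 2)
  · exact zero_ne_one (congrFun h 3)

theorem ne_smul_of_mem_projectiveGraph {u v : Fin 4 → F} (hu : u ∈ projectiveGraph f)
    (hv : v ∈ projectiveGraph f) (huv : u ≠ v) (c : F) : v ≠ c • u := by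
  intro h
  have last_coord : v 3 = c * u 3 := congrFun h 3
  rcases hu with rfl | ⟨x, y, rfl⟩ <;> rcases hv with rfl | ⟨x', y', rfl⟩
  · exact huv rfl
  · simp at last_coord
  · have hc : c = 0 := by simpa using last_coord.symm
    subst hc
    simpa using congrFun h 2
  · have hc : c = 1 := by simpa using last_coord.symm
    subst hc
    exact huv (by simpa using h.symm)

theorem linearIndependent_pair_of_mem_projectiveGraph {u v : Fin 4 → F}
    (hu : u ∈ projectiveGraph f) (hv : v ∈ projectiveGraph f) (huv : u ≠ v) :
    LinearIndependent F ![u, v] :=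
  (LinearIndependent.pair_iff' fun h ↦ zero_notMem_projectiveGraph f (h ▸ hu)).mpr
    fun c ↦ (ne_smul_of_mem_projectiveGraph hu hv huv c).symm

theorem infinity_notMem_span_affine_pair {x₁ y₁ x₂ y₂ : F} (h : (x₁, y₁) ≠ (x₂, y₂)) (z₁ z₂ : F) :
    ![0, 0, 1, 0] ∉ Submodule.span F {![x₁, y₁, z₁, 1], ![x₂, y₂, z₂, 1]} := by
  rw [Submodule.mem_span_pair]
  rintro ⟨α, β, comb⟩
  have hβ : β = -α := eq_neg_of_add_eq_zero_right (by simpa using congrFun comb 3)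
  have hα : α ≠ 0 := by
    rintro rfl
    simpa [hβ] using congrFun comb 2
  have hx : x₁ = x₂ := by
    simpa [hβ, hα, ← sub_eq_add_neg, sub_eq_zero] using congrFun comb 0
  have hy : y₁ = y₂ := by
    simpa [hβ, hα, ← sub_eq_add_neg, sub_eq_zero] using congrFun comb 1
  exact h (Prod.ext hx hy)

theorem affine_notMem_span_infinity_affine {x y x₁ y₁ : F} (h : (x, y) ≠ (x₁, y₁)) (z z₁ : F) :
    ![x, y, z, 1] ∉ Submodule.span F {![0, 0, 1, 0], ![x₁, y₁, z₁, 1]} := by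
  rw [Submodule.mem_span_pair]
  rintro ⟨α, β, comb⟩
  have hβ : β = 1 := by simpa using congrFun comb 3
  have hx : x₁ = x := by simpa [hβ] using congrFun comb 0
  have hy : y₁ = y := by simpa [hβ] using congrFun comb 1
  exact h (Prod.ext hx.symm hy.symm)

theorem NoThreeCollinearOnGraph.notMem_span_pair (hf : NoThreeCollinearOnGraph f)
    {x y x₁ y₁ x₂ y₂ : F} (h₁ : (x, y) ≠ (x₁, y₁)) (h₂ : (x, y) ≠ (x₂, y₂)) :
    ![x, y, f x y, 1] ∉ Submodule.span F {![x₁, y₁, f x₁ y₁, 1], ![x₂, y₂, f x₂ y₂, 1]} := by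
  rw [Submodule.mem_span_pair]
  rintro ⟨α, t, comb⟩
  have hα : α = 1 - t := eq_sub_of_add_eq (by simpa using congrFun comb 3)
  have on_line {r r₁ r₂ : F} (h : α * r₁ + t * r₂ = r) : r = r₁ + t * (r₂ - r₁) := by
    rw [← h, hα]; ring
  have hx : x = x₁ + t * (x₂ - x₁) := on_line (congrFun comb 0)
  have hy : y = y₁ + t * (y₂ - y₁) := on_line (congrFun comb 1)
  have hz : f x y = f x₁ y₁ + t * (f x₂ y₂ - f x₁ y₁) := on_line (congrFun comb 2)
  have collinear : f (x₁ + t * (x₂ - x₁)) (y₁ + t * (y₂ - y₁)) =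
      f x₁ y₁ + t * (f (x₁ + (x₂ - x₁)) (y₁ + (y₂ - y₁)) - f x₁ y₁) := by
    rw [← hx, ← hy, add_sub_cancel, add_sub_cancel, hz]
  rcases hf _ _ _ _ _ collinear with ht | ht | ⟨hx₂, hy₂⟩
  · exact h₁ (by simp [hx, hy, ht])
  · exact h₂ (by simp [hx, hy, ht])
  · exact h₁ (by simp [hx, hy, hx₂, hy₂])

theorem notMem_span_pair_of_mem_projectiveGraph (hf : NoThreeCollinearOnGraph f)
    {u v w : Fin 4 → F} (hu : u ∈ projectiveGraph f) (hv : v ∈ projectiveGraph f)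
    (hw : w ∈ projectiveGraph f) (huv : u ≠ v) (huw : u ≠ w) (hvw : v ≠ w) :
    u ∉ Submodule.span F {v, w} := by
  have base_ne {x y x' y' : F} (h : ![x, y, f x y, 1] ≠ ![x', y', f x' y', 1]) :
      (x, y) ≠ (x', y') := by
    rintro ⟨⟩
    exact h rfl
  rcases hu with rfl | ⟨x, y, rfl⟩ <;> rcases hv with rfl | ⟨x₁, y₁, rfl⟩ <;>
    rcases hw with rfl | ⟨x₂, y₂, rfl⟩
  · exact absurd rfl huv
  · exact absurd rfl huv
  · exact absurd rfl huw
  · exact infinity_notMem_span_affine_pair (base_ne hvw) _ _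
  · exact absurd rfl hvw
  · exact affine_notMem_span_infinity_affine (base_ne huw) _ _
  · rw [Set.pair_comm]
    exact affine_notMem_span_infinity_affine (base_ne huv) _ _
  · exact hf.notMem_span_pair (base_ne huv) (base_ne huw)

theorem linearIndependent_triple_of_mem_projectiveGraph (hf : NoThreeCollinearOnGraph f)
    {u v w : Fin 4 → F} (hu : u ∈ projectiveGraph f) (hv : v ∈ projectiveGraph f)
    (hw : w ∈ projectiveGraph f) (huv : u ≠ v) (huw : u ≠ w) (hvw : v ≠ w) :
    LinearIndependent F ![u, v, w] := by
  refine linearIndependent_finCons.mpr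
    ⟨linearIndependent_pair_of_mem_projectiveGraph hv hw hvw, ?_⟩
  rw [Matrix.range_cons_cons_empty]
  exact notMem_span_pair_of_mem_projectiveGraph hf hu hv hw huv huw hvw

end ProjectiveGraph

theorem exists_isTitsEndomorphism_eq_pow {F : Type*} [Field F] [Fintype F] {e : ℕ}
    (hF : Fintype.card F = 2 ^ (2 * e + 1)) :
    ∃ σ : F →+* F, IsTitsEndomorphism σ ∧ ∀ x, σ x = x ^ 2 ^ (e + 1) := by
  have : CharP F 2 := charP_of_card_eq_prime_pow hF
  refine ⟨iterateFrobenius F 2 (e + 1), fun x ↦ ?_, iterateFrobenius_def 2 (e + 1)⟩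
  have exponent_sq : 2 ^ (e + 1) * 2 ^ (e + 1) = Fintype.card F * 2 := by rw [hF]; ring
  rw [iterateFrobenius_def, iterateFrobenius_def, ← pow_mul, exponent_sq, pow_mul,
    FiniteField.pow_card]

theorem tits_ovoid_is_ovoid_general {F : Type*} [Field F] {σ : F →+* F}
    (hσ : IsTitsEndomorphism σ) :
    let T := projectiveGraph (titsForm σ)
    T.encard = ENat.card F ^ 2 + 1 ∧
    (∀ u ∈ T, ∀ v ∈ T, u ≠ v → ∀ c : F, v ≠ c • u) ∧
    (∀ u ∈ T, ∀ v ∈ T, ∀ w ∈ T, u ≠ v → u ≠ w → v ≠ w →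
      LinearIndependent F ![u, v, w]) :=
  ⟨encard_projectiveGraph _,
    fun _ hu _ hv huv ↦ ne_smul_of_mem_projectiveGraph hu hv huv,
    fun _ hu _ hv _ hw ↦
      linearIndependent_triple_of_mem_projectiveGraph hσ.noThreeCollinearOnGraph_titsForm hu hv hw⟩

/-- For q = 2^{2e+1} (e ≥ 1) and σ = 2^{e+1}, the set
T = {(0,0,1,0)} ∪ {(x, y, x^σ + xy + y^{σ+2}, 1) : x, y ∈ GF(q)} consists of q²+1
pairwise non-proportional vectors in GF(q)⁴, any three distinct of which are linearly
independent; hence T spans an ovoid (the Tits ovoid) in PG(3,q). -/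
theorem tits_ovoid_is_ovoid {q e : ℕ} (he : 1 ≤ e) (hq : q = 2 ^ (2 * e + 1))
    (F : Type) [Field F] [Fintype F] (hF : Fintype.card F = q) :
    let σ : ℕ := 2 ^ (e + 1)
    let T : Set (Fin 4 → F) :=
      insert ![0, 0, 1, 0] {w | ∃ x y : F, w = ![x, y, x ^ σ + x * y + y ^ (σ + 2), 1]}
    T.ncard = q ^ 2 + 1 ∧
    (∀ u ∈ T, ∀ v ∈ T, u ≠ v → ∀ c : F, v ≠ c • u) ∧
    (∀ u ∈ T, ∀ v ∈ T, ∀ w ∈ T, u ≠ v → u ≠ w → v ≠ w →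
      LinearIndependent F ![u, v, w]) := by
  intro σ T
  obtain ⟨τ, hτ, τ_eq_pow⟩ := exists_isTitsEndomorphism_eq_pow (hF.trans hq)
  have hT : projectiveGraph (titsForm τ) = T := by
    simp only [projectiveGraph, titsForm, τ_eq_pow, ← pow_add, T, σ]
  obtain ⟨hcard, hindep⟩ := hT ▸ tits_ovoid_is_ovoid_general hτ
  rw [ENat.card_eq_coe_fintype_card, hF, ← T.toFinite.cast_ncard_eq] at hcard
  exact ⟨mod_cast hcard, hindep⟩
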